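/- Let α ∈ (0, 1/3) and n = 2. There exists a constant C = C(α) > 1 such that for every ellipsoid E ⊂ ℝ² (image of a ball under an invertible affine map), ∫_E (1+|x|²)^{1/(2α) − 2} dx ≤ C ∫_{(1/2)E} (1+|x|²)^{1/(2α) − 2} dx, where (1/2)E denotes the dilation of E by factor 1/2 about its center. That is, the measure (1+|x|²)^{1/(2α)−2} dx is doubling with respect to ellipsoids. -/

import Mathlib

/-!
The weight is a power of the norm of an affine map: `(1 + ‖x‖²) ^ p = ‖(1, x)‖ ^ q` with
`q = 2 p > -1`. On an interval `[c, d]`, let `r` minimise `N t = ‖a + t • b‖`. The triangle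
inequality gives `N s * |t - r| ≤ 3 (d - c) N t` for all `s`, `t`, so `N ^ q` is comparable to a
constant up to a factor `|t - r| ^ q`, which is integrable. Hence the integral of `N ^ q` over
`[c, d]` is controlled by its integral over any subset of positive measure, uniformly in `a`, `b`.

To pass to a set `S` that is star-shaped about the origin, use `S ⊆ s • S` for `s ∈ [1, 2]` and
`s • S ⊆ (1/2) • S` for `s ∈ [1/4, 1/2]`: averaging over `s`, scaling and Tonelli reduce the
comparison of `S` with `(1/2) • S` to the comparison of these two intervals on each ray.
-/

open MeasureTheory Measure Set Metric Module
open scoped ENNReal NNReal Pointwise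

lemma ennreal_rpow_le_rpow_of_nonpos {x y : ℝ≥0∞} {z : ℝ} (hxy : x ≤ y) (hz : z ≤ 0) :
    y ^ z ≤ x ^ z := by
  rw [← neg_neg z, ENNReal.rpow_neg y, ENNReal.rpow_neg x, ENNReal.inv_le_inv]
  exact ENNReal.rpow_le_rpow hxy (neg_nonneg.2 hz)

lemma setLIntegral_mul_setLIntegral_le {α β : Type*} [MeasurableSpace α] [MeasurableSpace β]
    {μ : Measure α} {ν : Measure β} {A : Set α} {B : Set β} {f g : α → ℝ≥0∞} {h k : β → ℝ≥0∞}
    (hg : Measurable g) (hk : Measurable k)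
    (hle : ∀ x ∈ A, ∀ y ∈ B, f x * h y ≤ g x * k y) :
    (∫⁻ x in A, f x ∂μ) * ∫⁻ y in B, h y ∂ν ≤ (∫⁻ x in A, g x ∂μ) * ∫⁻ y in B, k y ∂ν := by
  calc (∫⁻ x in A, f x ∂μ) * ∫⁻ y in B, h y ∂ν
      ≤ ∫⁻ x in A, f x * ∫⁻ y in B, h y ∂ν ∂μ := lintegral_mul_const_le _ _
    _ ≤ ∫⁻ x in A, g x * ∫⁻ y in B, k y ∂ν ∂μ := by
        refine setLIntegral_mono (hg.mul_const _) fun x hx => (lintegral_const_mul_le _ _).trans ?_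
        rw [← lintegral_const_mul _ hk]
        exact setLIntegral_mono (hk.const_mul _) (hle x hx)
    _ = (∫⁻ x in A, g x ∂μ) * ∫⁻ y in B, k y ∂ν := lintegral_mul_const _ hg

lemma setLIntegral_add_left_image {G : Type*} [AddGroup G] [MeasurableSpace G] [MeasurableAdd G]
    (μ : Measure G) [μ.IsAddLeftInvariant] (x₀ : G) (g : G → ℝ≥0∞) (S : Set G) :
    ∫⁻ x in (x₀ + ·) '' S, g x ∂μ = ∫⁻ v in S, g (x₀ + v) ∂μ :=
  ((measurePreserving_add_left μ x₀).setLIntegral_comp_emb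
    (measurableEmbedding_addLeft x₀) g S).symm

lemma ofReal_one_add_norm_sq_rpow {V : Type*} [SeminormedAddCommGroup V] (p : ℝ) (x : V) :
    ENNReal.ofReal ((1 + ‖x‖ ^ 2) ^ p) = ‖WithLp.toLp 2 ((1 : ℝ), x)‖ₑ ^ (2 * p) := by
  have hsq : 1 + ‖x‖ ^ 2 = ‖WithLp.toLp 2 ((1 : ℝ), x)‖ ^ 2 := by
    simp [WithLp.prod_norm_sq_eq_of_L2]
  have hpos : 0 < ‖WithLp.toLp 2 ((1 : ℝ), x)‖ := by
    nlinarith [norm_nonneg (WithLp.toLp 2 ((1 : ℝ), x)), sq_nonneg ‖x‖]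
  rw [hsq, ← Real.rpow_natCast, ← Real.rpow_mul hpos.le, ← ENNReal.ofReal_rpow_of_pos hpos,
    ofReal_norm, Nat.cast_ofNat]

section PowersOnTheLine

variable {q : ℝ}

lemma setLIntegral_ball_enorm_rpow_ne_top (hq : -1 < q) (R : ℝ) :
    ∫⁻ t in ball (0 : ℝ) R, ‖t‖ₑ ^ q ≠ ∞ := by
  have hint : IntegrableOn (fun t : ℝ => ‖t‖ ^ q) (ball 0 R) :=
    integrableOn_ball_of_norm_le_rpow (by simp) (C := 1) (α := -q) (by simpa using neg_lt.1 hq)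
      (.of_forall fun t => by simp [abs_of_nonneg (Real.rpow_nonneg (abs_nonneg t) q)])
      (measurable_norm.pow_const q).aestronglyMeasurable
  have hcongr : ∀ᵐ t ∂volume.restrict (ball (0 : ℝ) R), ‖t‖ₑ ^ q = ‖‖t‖ ^ q‖ₑ := by
    filter_upwards [ae_restrict_of_ae (Measure.ae_ne volume (0 : ℝ))] with t ht
    rw [Real.enorm_of_nonneg (Real.rpow_nonneg (norm_nonneg t) q),
      ← ENNReal.ofReal_rpow_of_pos (norm_pos_iff.2 ht), ofReal_norm]
  rw [lintegral_congr_ae hcongr]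
  exact hint.hasFiniteIntegral.ne

lemma exists_setLIntegral_enorm_sub_rpow_le (hq : -1 < q) (c d : ℝ) :
    ∃ A ≠ ∞, ∀ r ∈ Icc c d, ∫⁻ t in Icc c d, ‖t - r‖ₑ ^ q ≤ A := by
  refine ⟨_, setLIntegral_ball_enorm_rpow_ne_top hq (d - c + 1), fun r hr => ?_⟩
  rw [← (measurePreserving_sub_right volume r).setLIntegral_comp_preimage_emb
    (measurableEmbedding_subRight r) (fun t => ‖t‖ₑ ^ q)]
  refine lintegral_mono_set fun t ht => ?_
  rw [mem_preimage, mem_ball_zero_iff, Real.norm_eq_abs, abs_lt]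
  constructor <;> linarith [hr.1, hr.2, ht.1, ht.2]

lemma exists_le_setLIntegral_enorm_sub_rpow (hq : 0 ≤ q) {J : Set ℝ} (hJ : volume J ≠ 0) :
    ∃ B : ℝ≥0, B ≠ 0 ∧ ∀ r : ℝ, (B : ℝ≥0∞) ≤ ∫⁻ t in J, ‖t - r‖ₑ ^ q := by
  obtain ⟨y, hy_pos, hyJ⟩ := ENNReal.lt_iff_exists_nnreal_btwn.1 (pos_iff_ne_zero.2 hJ)
  have hy0 : 0 < y := by exact_mod_cast hy_pos
  refine ⟨(y / 4) ^ q * (y / 2), by positivity, fun r => ?_⟩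
  have hvol : ((y / 2 : ℝ≥0) : ℝ≥0∞) ≤ volume (J \ ball r (y / 4)) := by
    calc ((y / 2 : ℝ≥0) : ℝ≥0∞) = y - (y / 2 : ℝ≥0) := by
          rw [← ENNReal.coe_sub]; congr; exact (tsub_eq_of_eq_add (add_halves y).symm).symm
      _ = y - volume (ball r (y / 4)) := by
          rw [Real.volume_ball, show 2 * ((y : ℝ) / 4) = (y / 2 : ℝ≥0) by push_cast; ring,
            ENNReal.ofReal_coe_nnreal]
      _ ≤ volume J - volume (ball r (y / 4)) := by gcongr
      _ ≤ volume (J \ ball r (y / 4)) := le_measure_sdiff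
  calc (((y / 4) ^ q * (y / 2) : ℝ≥0) : ℝ≥0∞)
      ≤ ((y / 4 : ℝ≥0) : ℝ≥0∞) ^ q * volume (J \ ball r (y / 4)) := by
        rw [ENNReal.coe_mul, ENNReal.coe_rpow_of_nonneg _ hq]; gcongr
    _ = ∫⁻ _ in J \ ball r (y / 4), ((y / 4 : ℝ≥0) : ℝ≥0∞) ^ q := (setLIntegral_const _ _).symm
    _ ≤ ∫⁻ t in J \ ball r (y / 4), ‖t - r‖ₑ ^ q := by
        refine setLIntegral_mono (by fun_prop) fun t ht => ENNReal.rpow_le_rpow ?_ hq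
        rw [enorm_eq_nnnorm, ENNReal.coe_le_coe, ← NNReal.coe_le_coe, coe_nnnorm, ← dist_eq_norm]
        simpa using ht.2
    _ ≤ ∫⁻ t in J, ‖t - r‖ₑ ^ q := lintegral_mono_set sdiff_subset

end PowersOnTheLine

section AffinePaths

variable {F : Type*} [SeminormedAddCommGroup F] [NormedSpace ℝ F] {c d q : ℝ}

lemma exists_norm_add_smul_mul_abs_sub_le (hcd : c ≤ d) (a b : F) :
    ∃ r ∈ Icc c d, ∀ s ∈ Icc c d, ∀ t ∈ Icc c d,
      ‖a + s • b‖ * |t - r| ≤ 3 * (d - c) * ‖a + t • b‖ := by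
  obtain ⟨r, hr, hmin⟩ := isCompact_Icc.exists_isMinOn (nonempty_Icc.2 hcd)
    (f := fun t => ‖a + t • b‖) (by fun_prop)
  refine ⟨r, hr, fun s hs t ht => ?_⟩
  have hdiff (u v : ℝ) : ‖(a + u • b) - (a + v • b)‖ = |u - v| * ‖b‖ := by
    rw [add_sub_add_left_eq_sub, ← sub_smul, norm_smul, Real.norm_eq_abs]
  have hst : |s - t| ≤ d - c := abs_sub_le_of_le_of_le hs.1 hs.2 ht.1 ht.2
  have htr : |t - r| ≤ d - c := abs_sub_le_of_le_of_le ht.1 ht.2 hr.1 hr.2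
  have hnear : |t - r| * ‖b‖ ≤ 2 * ‖a + t • b‖ := by
    calc |t - r| * ‖b‖ = ‖(a + t • b) - (a + r • b)‖ := (hdiff t r).symm
      _ ≤ ‖a + t • b‖ + ‖a + r • b‖ := norm_sub_le _ _
      _ ≤ ‖a + t • b‖ + ‖a + t • b‖ := by gcongr; exact hmin ht
      _ = 2 * ‖a + t • b‖ := (two_mul _).symm
  have hfar : ‖a + s • b‖ ≤ ‖a + t • b‖ + (d - c) * ‖b‖ := by
    calc ‖a + s • b‖ ≤ ‖a + t • b‖ + ‖(a + s • b) - (a + t • b)‖ := norm_le_norm_add_norm_sub' _ _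
      _ ≤ ‖a + t • b‖ + (d - c) * ‖b‖ := by rw [hdiff]; gcongr
  calc ‖a + s • b‖ * |t - r| ≤ (‖a + t • b‖ + (d - c) * ‖b‖) * |t - r| := by gcongr
    _ = |t - r| * ‖a + t • b‖ + (d - c) * (|t - r| * ‖b‖) := by ring
    _ ≤ (d - c) * ‖a + t • b‖ + (d - c) * (2 * ‖a + t • b‖) := by
        have := sub_nonneg.2 hcd
        gcongr
    _ = 3 * (d - c) * ‖a + t • b‖ := by ring

-- In `ℝ≥0∞` negative powers are antitone everywhere, as `0 ^ q = ∞` for `q < 0`; over `ℝ` the zeros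
-- of `a + t • b` would have to be treated separately.
lemma exists_enorm_add_smul_mul_enorm_sub_le (hcd : c ≤ d) (a b : F) :
    ∃ r ∈ Icc c d, ∀ s ∈ Icc c d, ∀ t ∈ Icc c d,
      ‖a + s • b‖ₑ * ‖t - r‖ₑ ≤ ENNReal.ofReal (3 * (d - c)) * ‖a + t • b‖ₑ := by
  obtain ⟨r, hr, hle⟩ := exists_norm_add_smul_mul_abs_sub_le hcd a b
  refine ⟨r, hr, fun s hs t ht => ?_⟩
  have hD : 0 ≤ 3 * (d - c) := by linarith
  simp only [← ofReal_norm]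
  rw [← ENNReal.ofReal_mul (norm_nonneg _), ← ENNReal.ofReal_mul hD]
  exact ENNReal.ofReal_le_ofReal (hle s hs t ht)

lemma measurable_enorm_add_smul_rpow (a b : F) (q : ℝ) :
    Measurable fun t : ℝ => ‖a + t • b‖ₑ ^ q :=
  (Continuous.enorm (by fun_prop)).measurable.pow_const q

variable (F) in
lemma exists_setLIntegral_enorm_add_smul_rpow_le_of_nonneg (hq : 0 ≤ q) (hcd : c ≤ d) {J : Set ℝ}
    (hJcd : J ⊆ Icc c d) (hJ : volume J ≠ 0) :
    ∃ C ≠ ∞, ∀ a b : F,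
      ∫⁻ t in Icc c d, ‖a + t • b‖ₑ ^ q ≤ C * ∫⁻ t in J, ‖a + t • b‖ₑ ^ q := by
  set D := ENNReal.ofReal (3 * (d - c))
  obtain ⟨B, hB0, hB⟩ := exists_le_setLIntegral_enorm_sub_rpow hq hJ
  have hD : D ^ q * volume (Icc c d) ≠ ∞ :=
    ENNReal.mul_ne_top (ENNReal.rpow_ne_top_of_nonneg hq ENNReal.ofReal_ne_top)
      measure_Icc_lt_top.ne
  refine ⟨D ^ q * volume (Icc c d) / B, ENNReal.div_ne_top hD (by simpa using hB0), fun a b => ?_⟩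
  obtain ⟨r, -, hle⟩ := exists_enorm_add_smul_mul_enorm_sub_le hcd a b
  have hf := measurable_enorm_add_smul_rpow a b q
  rw [ENNReal.mul_comm_div, ← mul_div_assoc, ENNReal.le_div_iff_mul_le (by simp [hB0]) (by simp)]
  calc (∫⁻ s in Icc c d, ‖a + s • b‖ₑ ^ q) * B
      ≤ (∫⁻ s in Icc c d, ‖a + s • b‖ₑ ^ q) * ∫⁻ t in J, ‖t - r‖ₑ ^ q := by gcongr; exact hB r
    _ ≤ (∫⁻ _ in Icc c d, D ^ q) * ∫⁻ t in J, ‖a + t • b‖ₑ ^ q := by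
        refine setLIntegral_mul_setLIntegral_le measurable_const hf fun s hs t ht => ?_
        simp only [← ENNReal.mul_rpow_of_nonneg _ _ hq]
        exact ENNReal.rpow_le_rpow (hle s hs t (hJcd ht)) hq
    _ = D ^ q * volume (Icc c d) * ∫⁻ t in J, ‖a + t • b‖ₑ ^ q := by rw [setLIntegral_const]

variable (F) in
lemma exists_setLIntegral_enorm_add_smul_rpow_le_of_nonpos (hq : -1 < q) (hq' : q ≤ 0)
    (hcd : c < d) {J : Set ℝ} (hJcd : J ⊆ Icc c d) (hJ : volume J ≠ 0) :
    ∃ C ≠ ∞, ∀ a b : F,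
      ∫⁻ t in Icc c d, ‖a + t • b‖ₑ ^ q ≤ C * ∫⁻ t in J, ‖a + t • b‖ₑ ^ q := by
  set D := ENNReal.ofReal (3 * (d - c))
  have hD0 : D ≠ 0 := by simpa [D] using hcd
  have hJtop : volume J ≠ ∞ := measure_ne_top_of_subset hJcd measure_Icc_lt_top.ne
  have hDJ0 : D ^ q * volume J ≠ 0 :=
    mul_ne_zero (ENNReal.rpow_pos hD0.bot_lt ENNReal.ofReal_ne_top |>.ne') hJ
  have hDJtop : D ^ q * volume J ≠ ∞ :=
    ENNReal.mul_ne_top (ENNReal.rpow_ne_top_of_ne_zero hD0 ENNReal.ofReal_ne_top) hJtop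
  obtain ⟨A, hAtop, hA⟩ := exists_setLIntegral_enorm_sub_rpow_le hq c d
  refine ⟨A / (D ^ q * volume J), ENNReal.div_ne_top hAtop hDJ0, fun a b => ?_⟩
  obtain ⟨r, hr, hle⟩ := exists_enorm_add_smul_mul_enorm_sub_le hcd.le a b
  have hf := measurable_enorm_add_smul_rpow a b q
  rw [ENNReal.mul_comm_div, ← mul_div_assoc, ENNReal.le_div_iff_mul_le (.inl hDJ0) (.inl hDJtop)]
  calc (∫⁻ t in Icc c d, ‖a + t • b‖ₑ ^ q) * (D ^ q * volume J)
      = (∫⁻ t in Icc c d, ‖a + t • b‖ₑ ^ q) * ∫⁻ _ in J, D ^ q := by rw [setLIntegral_const]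
    _ ≤ (∫⁻ t in Icc c d, ‖t - r‖ₑ ^ q) * ∫⁻ s in J, ‖a + s • b‖ₑ ^ q := by
        refine setLIntegral_mul_setLIntegral_le (by fun_prop) hf fun t ht s hs => ?_
        rw [← ENNReal.mul_rpow_of_ne_top (by finiteness) (by finiteness),
          ← ENNReal.mul_rpow_of_ne_top (by finiteness) (by finiteness)]
        refine ennreal_rpow_le_rpow_of_nonpos ?_ hq'
        rw [mul_comm _ D, mul_comm ‖t - r‖ₑ]
        exact hle s (hJcd hs) t ht
    _ ≤ A * ∫⁻ s in J, ‖a + s • b‖ₑ ^ q := by gcongr; exact hA r hr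

variable (F) in
lemma exists_setLIntegral_enorm_add_smul_rpow_le (hq : -1 < q) {J : Set ℝ}
    (hJcd : J ⊆ Icc c d) (hJ : volume J ≠ 0) :
    ∃ C ≠ ∞, ∀ a b : F,
      ∫⁻ t in Icc c d, ‖a + t • b‖ₑ ^ q ≤ C * ∫⁻ t in J, ‖a + t • b‖ₑ ^ q := by
  have hcd : c < d := by
    have : 0 < volume (Icc c d) := (pos_iff_ne_zero.2 hJ).trans_le (measure_mono hJcd)
    simpa using this
  rcases le_total 0 q with hq0 | hq0
  · exact exists_setLIntegral_enorm_add_smul_rpow_le_of_nonneg F hq0 hcd.le hJcd hJ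
  · exact exists_setLIntegral_enorm_add_smul_rpow_le_of_nonpos F hq hq0 hcd hJcd hJ

end AffinePaths

section StarConvex

variable {V : Type*} [NormedAddCommGroup V] [NormedSpace ℝ V] [FiniteDimensional ℝ V]
  [MeasurableSpace V] [BorelSpace V] (μ : Measure V) [μ.IsAddHaarMeasure]

lemma setLIntegral_smul_set {s : ℝ} (hs : 0 < s) (g : V → ℝ≥0∞) (S : Set V) :
    ∫⁻ x in s • S, g x ∂μ = ENNReal.ofReal s ^ finrank ℝ V * ∫⁻ x in S, g (s • x) ∂μ := by
  have hs' : s⁻¹ ≠ 0 := inv_ne_zero hs.ne'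
  have hmap : MeasurePreserving (s⁻¹ • ·) μ (ENNReal.ofReal s ^ finrank ℝ V • μ) :=
    ⟨measurable_const_smul _, by
      rw [map_addHaar_smul μ hs', inv_pow, inv_inv, abs_of_pos (by positivity),
        ENNReal.ofReal_pow hs.le]⟩
  rw [← smul_eq_mul, ← lintegral_smul_measure, ← Measure.restrict_smul,
    ← hmap.setLIntegral_comp_preimage_emb (measurableEmbedding_const_smul₀ hs'),
    preimage_smul_inv₀ hs.ne']
  simp only [smul_inv_smul₀ hs.ne']

variable {μ} {S : Set V} {g : V → ℝ≥0∞} {s t : ℝ}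

lemma setLIntegral_le_mul_setLIntegral_comp_smul (hS : StarConvex ℝ 0 S) (hs : 1 ≤ s) :
    ∫⁻ x in S, g x ∂μ ≤ ENNReal.ofReal s ^ finrank ℝ V * ∫⁻ x in S, g (s • x) ∂μ := by
  rw [← setLIntegral_smul_set μ (by linarith) g S]
  exact lintegral_mono_set fun x hx => hS.mem_smul hx hs

lemma setLIntegral_comp_smul_le_mul_setLIntegral (hS : StarConvex ℝ 0 S) (hs : 0 < s)
    (hst : s ≤ t) :
    ∫⁻ x in S, g (s • x) ∂μ ≤ ENNReal.ofReal s⁻¹ ^ finrank ℝ V * ∫⁻ x in t • S, g x ∂μ := by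
  have hsub : s • S ⊆ t • S := by
    rintro _ ⟨x, hx, rfl⟩
    have ht : 0 < t := hs.trans_le hst
    refine ⟨(s / t) • x, hS.smul_mem hx (by positivity) ((div_le_one ht).2 hst), ?_⟩
    simp only [smul_smul, mul_div_cancel₀ _ ht.ne']
  calc ∫⁻ x in S, g (s • x) ∂μ
      = ENNReal.ofReal s⁻¹ ^ finrank ℝ V * ∫⁻ x in s • S, g x ∂μ := by
        rw [setLIntegral_smul_set μ hs, ← mul_assoc, ← mul_pow,
          ← ENNReal.ofReal_mul (by positivity), inv_mul_cancel₀ hs.ne',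
          ENNReal.ofReal_one, one_pow, one_mul]
    _ ≤ ENNReal.ofReal s⁻¹ ^ finrank ℝ V * ∫⁻ x in t • S, g x ∂μ := by gcongr

lemma setLIntegral_le_of_setLIntegral_smul_le (hS : StarConvex ℝ 0 S) (hg : Measurable g)
    {C : ℝ≥0∞} (hC : ∀ v, ∫⁻ s in Icc (1 : ℝ) 2, g (s • v) ≤
      C * ∫⁻ s in Icc (1 / 4 : ℝ) (1 / 2), g (s • v)) :
    ∫⁻ x in S, g x ∂μ ≤ 8 ^ finrank ℝ V * C * ∫⁻ x in (1 / 2 : ℝ) • S, g x ∂μ := by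
  have hmeas : Measurable fun z : ℝ × V => g (z.1 • z.2) := by fun_prop
  have hmeas' : Measurable fun z : V × ℝ => g (z.2 • z.1) := by fun_prop
  calc ∫⁻ x in S, g x ∂μ = ∫⁻ _ in Icc (1 : ℝ) 2, ∫⁻ x in S, g x ∂μ := by
        rw [setLIntegral_const, Real.volume_Icc]; norm_num
    _ ≤ ∫⁻ s in Icc (1 : ℝ) 2, 2 ^ finrank ℝ V * ∫⁻ x in S, g (s • x) ∂μ := by
        refine setLIntegral_mono' measurableSet_Icc fun s hs => ?_
        refine (setLIntegral_le_mul_setLIntegral_comp_smul hS hs.1).trans ?_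
        gcongr
        simpa using ENNReal.ofReal_le_ofReal hs.2
    _ = 2 ^ finrank ℝ V * ∫⁻ x in S, ∫⁻ s in Icc (1 : ℝ) 2, g (s • x) ∂volume ∂μ := by
        rw [lintegral_const_mul _ hmeas.lintegral_prod_right',
          lintegral_lintegral_swap hmeas.aemeasurable]
    _ ≤ 2 ^ finrank ℝ V * ∫⁻ x in S, C * ∫⁻ s in Icc (1 / 4 : ℝ) (1 / 2), g (s • x) ∂volume ∂μ := by
        gcongr with x
        exact hC x
    _ = 2 ^ finrank ℝ V * C * ∫⁻ s in Icc (1 / 4 : ℝ) (1 / 2), ∫⁻ x in S, g (s • x) ∂μ := by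
        rw [lintegral_const_mul _ hmeas'.lintegral_prod_right',
          lintegral_lintegral_swap hmeas'.aemeasurable, mul_assoc]
    _ ≤ 2 ^ finrank ℝ V * C *
          ∫⁻ _ in Icc (1 / 4 : ℝ) (1 / 2), 4 ^ finrank ℝ V * ∫⁻ x in (1 / 2 : ℝ) • S, g x ∂μ := by
        refine mul_le_mul_right (setLIntegral_mono' measurableSet_Icc fun s hs => ?_) _
        have hs0 : 0 < s := by linarith [hs.1]
        refine (setLIntegral_comp_smul_le_mul_setLIntegral hS hs0 hs.2).trans ?_
        gcongr
        simpa using ENNReal.ofReal_le_ofReal (inv_anti₀ (by norm_num) hs.1)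
    _ ≤ 2 ^ finrank ℝ V * C * (4 ^ finrank ℝ V * ∫⁻ x in (1 / 2 : ℝ) • S, g x ∂μ) := by
        rw [setLIntegral_const, Real.volume_Icc]
        exact mul_le_mul_right (mul_le_of_le_one_right' (by norm_num)) _
    _ = 8 ^ finrank ℝ V * C * ∫⁻ x in (1 / 2 : ℝ) • S, g x ∂μ := by
        rw [show (8 : ℝ≥0∞) = 2 * 4 by norm_num, mul_pow]; ring

end StarConvex

section Doubling

variable {V : Type*} [NormedAddCommGroup V] [NormedSpace ℝ V] [FiniteDimensional ℝ V]
  [MeasurableSpace V] [BorelSpace V] (μ : Measure V) [μ.IsAddHaarMeasure]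

lemma exists_setLIntegral_enorm_add_apply_rpow_le (F : Type*) [SeminormedAddCommGroup F]
    [NormedSpace ℝ F] {q : ℝ} (hq : -1 < q) :
    ∃ C ≠ ∞, ∀ (a : F) (L : V →L[ℝ] F) (S : Set V), StarConvex ℝ 0 S →
      ∫⁻ x in S, ‖a + L x‖ₑ ^ q ∂μ ≤ C * ∫⁻ x in (1 / 2 : ℝ) • S, ‖a + L x‖ₑ ^ q ∂μ := by
  have hsub : Icc (1 / 4 : ℝ) (1 / 2) ⊆ Icc 0 2 := Icc_subset_Icc (by norm_num) (by norm_num)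
  obtain ⟨C, hC, hline⟩ := exists_setLIntegral_enorm_add_smul_rpow_le F hq hsub (by norm_num)
  refine ⟨8 ^ finrank ℝ V * C, by finiteness, fun a L S hS => ?_⟩
  have hmeas : Measurable fun x => ‖a + L x‖ₑ ^ q :=
    (Continuous.enorm (by fun_prop)).measurable.pow_const q
  refine setLIntegral_le_of_setLIntegral_smul_le hS hmeas fun v => ?_
  simp only [map_smul]
  exact (lintegral_mono_set (Icc_subset_Icc (by norm_num) le_rfl)).trans (hline a (L v))

theorem stmt8_general {p : ℝ} (hp : -1 / 2 < p) :
    ∃ C : ℝ, 1 < C ∧ ∀ (x₀ : V) (S : Set V), StarConvex ℝ 0 S →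
      ∫⁻ x in (fun v => x₀ + v) '' S, ENNReal.ofReal ((1 + ‖x‖ ^ 2) ^ p) ∂μ ≤
        ENNReal.ofReal C *
          ∫⁻ x in (fun v => x₀ + (1 / 2 : ℝ) • v) '' S,
            ENNReal.ofReal ((1 + ‖x‖ ^ 2) ^ p) ∂μ := by
  obtain ⟨C, hC, hdoubling⟩ := exists_setLIntegral_enorm_add_apply_rpow_le μ
    (WithLp 2 (ℝ × V)) (q := 2 * p) (by linarith)
  refine ⟨C.toReal + 2, by linarith [C.toReal_nonneg], fun x₀ S hS => ?_⟩
  let inr : V →L[ℝ] WithLp 2 (ℝ × V) :=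
    (WithLp.prodContinuousLinearEquiv 2 ℝ ℝ V).symm.toContinuousLinearMap ∘L .inr ℝ ℝ V
  have hweight (v : V) : ENNReal.ofReal ((1 + ‖x₀ + v‖ ^ 2) ^ p) =
      ‖WithLp.toLp 2 ((1 : ℝ), x₀) + inr v‖ₑ ^ (2 * p) := by
    simp [ofReal_one_add_norm_sq_rpow, inr, ← WithLp.toLp_add]
  have hCle : C ≤ ENNReal.ofReal (C.toReal + 2) :=
    (ENNReal.le_ofReal_iff_toReal_le hC (by positivity)).2 (by linarith)
  have himage : (fun v => x₀ + (1 / 2 : ℝ) • v) '' S = (x₀ + ·) '' ((1 / 2 : ℝ) • S) := by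
    rw [← image_smul, image_image]
  rw [himage, setLIntegral_add_left_image, setLIntegral_add_left_image]
  simp only [hweight]
  exact (hdoubling _ inr S hS).trans (by gcongr)

end Doubling

/-- For `α ∈ (0, 1/3)`, the measure `(1+|x|²)^{1/(2α)-2} dx` on `ℝ²` is doubling with
respect to ellipsoids, with doubling constant depending only on `α`. -/
theorem stmt8 (α : ℝ) (hα : α ∈ Set.Ioo (0:ℝ) (1/3)) :
    ∃ C : ℝ, 1 < C ∧
      ∀ (x₀ : EuclideanSpace ℝ (Fin 2))
        (T : EuclideanSpace ℝ (Fin 2) ≃L[ℝ] EuclideanSpace ℝ (Fin 2)),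
        (∫⁻ x in (fun v => x₀ + T v) '' Metric.ball 0 1,
            ENNReal.ofReal ((1 + ‖x‖ ^ 2) ^ (1 / (2 * α) - 2))) ≤
          ENNReal.ofReal C *
            ∫⁻ x in (fun v => x₀ + (1/2 : ℝ) • T v) '' Metric.ball 0 1,
              ENNReal.ofReal ((1 + ‖x‖ ^ 2) ^ (1 / (2 * α) - 2)) := by
  have hp : -1 / 2 < 1 / (2 * α) - 2 := by
    have : 3 / 2 < 1 / (2 * α) := by
      rw [lt_div_iff₀ (by linarith [hα.1])]
      linarith [hα.2]
    linarith
  obtain ⟨C, hC, hdoubling⟩ := stmt8_general (volume : Measure (EuclideanSpace ℝ (Fin 2))) hp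
  refine ⟨C, hC, fun x₀ T => ?_⟩
  have hstar : StarConvex ℝ 0 (T '' Metric.ball 0 1) := by
    simpa using ((convex_ball 0 1).starConvex (mem_ball_self one_pos)).linear_image
      T.toLinearEquiv.toLinearMap
  simpa only [image_image] using hdoubling x₀ _ hstar
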